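/- Let X ⊆ P^1 × P^n be a finite set of distinct points having the (*)-property. Then X has the Cayley-Bacharach property if and only if X = X_1 × X_2 and X_2 ⊆ P^n is a Cayley-Bacharach scheme. -/

import Mathlib

/- Common setup: finite sets of points in the multiprojective space
   `P^m x P^n` over a field `K` of characteristic zero, their bihomogeneous
   vanishing ideals, bigraded Hilbert functions, Kähler differents,
   separators, Cayley-Bacharach property and complete intersections. -/

open MvPolynomial

set_option maxHeartbeats 1000000
set_option synthInstance.maxHeartbeats 400000

noncomputable section

namespace MultiProjPoints

variable (K : Type) [Field K] [CharZero K] [DecidableEq K]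

/-- The bigraded coordinate ring `S = K[X_0,…,X_m,Y_0,…,Y_n]` of `P^m × P^n`. -/
abbrev BiRing (m n : ℕ) : Type := MvPolynomial (Fin (m+1) ⊕ Fin (n+1)) K

/-- The weights giving the bigrading: `deg X_i = (1,0)`, `deg Y_j = (0,1)`. -/
def biwt (m n : ℕ) : (Fin (m+1) ⊕ Fin (n+1)) → ℤ × ℤ :=
  Sum.elim (fun _ => ((1 : ℤ), (0 : ℤ))) (fun _ => ((0 : ℤ), (1 : ℤ)))

variable {m n : ℕ}

/-- A (representative of a) point of `P^m × P^n`. -/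
abbrev BiPt (m n : ℕ) : Type := (Fin (m+1) → K) × (Fin (n+1) → K)

/-- `F` is bihomogeneous of degree `d`. -/
def IsBihom (F : BiRing K m n) (d : ℤ × ℤ) : Prop :=
  IsWeightedHomogeneous (biwt m n) F d

/-- Evaluation of a polynomial at (a representative of) a point. -/
def evalB (p : BiPt K m n) (F : BiRing K m n) : K :=
  eval (Sum.elim p.1 p.2) F

/-- A finset of representatives is a good configuration of points of
`P^m × P^n`: all representatives are nonzero, and proportional
representatives coincide (so distinct elements are distinct projective
points, and images under the two projections behave correctly). -/
def GoodConfig (𝕏 : Finset (BiPt K m n)) : Prop :=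
  (∀ p ∈ 𝕏, p.1 ≠ 0 ∧ p.2 ≠ 0) ∧
  (∀ p ∈ 𝕏, ∀ q ∈ 𝕏, (∃ c : K, c ≠ 0 ∧ p.1 = c • q.1) → p.1 = q.1) ∧
  (∀ p ∈ 𝕏, ∀ q ∈ 𝕏, (∃ c : K, c ≠ 0 ∧ p.2 = c • q.2) → p.2 = q.2)

/-- The bihomogeneous vanishing ideal `I_𝕏` of a set of points. -/
def vIdealB (𝕏 : Finset (BiPt K m n)) : Ideal (BiRing K m n) :=
  Ideal.span {F | (∃ d, IsBihom K F d) ∧ ∀ p ∈ 𝕏, evalB K p F = 0}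

/-- The bihomogeneous vanishing ideal of a single point. -/
def ptIdealB (p : BiPt K m n) : Ideal (BiRing K m n) :=
  Ideal.span {F | (∃ d, IsBihom K F d) ∧ evalB K p F = 0}

/-- The degree-`d` piece of `S/I`. -/
def degPieceB (I : Ideal (BiRing K m n)) (d : ℤ × ℤ) :
    Submodule K (BiRing K m n ⧸ I) :=
  (weightedHomogeneousSubmodule K (biwt m n) d).map
    (Ideal.Quotient.mkₐ K I).toLinearMap

/-- The Hilbert function of `S/I`. -/
def HFI (I : Ideal (BiRing K m n)) (d : ℤ × ℤ) : ℕ :=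
  Module.finrank K (degPieceB K I d)

/-- The Hilbert function of a set of points in `P^m × P^n`. -/
def HFB (𝕏 : Finset (BiPt K m n)) (d : ℤ × ℤ) : ℕ :=
  HFI K (vIdealB K 𝕏) d

/-- The Hilbert function of a (bihomogeneous) ideal `J` of `R_𝕏 = S/I`. -/
def HFIdealB (I : Ideal (BiRing K m n)) (J : Ideal (BiRing K m n ⧸ I))
    (d : ℤ × ℤ) : ℕ :=
  Module.finrank K ↥((Submodule.restrictScalars K J) ⊓ degPieceB K I d)

/- ### Single projective space `P^N` -/

/-- The coordinate ring `K[X_0,…,X_N]` of `P^N`. -/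
abbrev PRing (N : ℕ) : Type := MvPolynomial (Fin (N+1)) K

/-- The standard grading on `K[X_0,…,X_N]` (with values in `ℤ`). -/
def wt1 (N : ℕ) : Fin (N+1) → ℤ := fun _ => 1

/-- `F` is homogeneous of degree `d`. -/
def IsHom1 {N : ℕ} (F : PRing K N) (d : ℤ) : Prop :=
  IsWeightedHomogeneous (wt1 N) F d

/-- A good finite set of representatives of points in `P^N`. -/
def GoodSet {N : ℕ} (Y : Finset (Fin (N+1) → K)) : Prop :=
  (∀ q ∈ Y, q ≠ 0) ∧
  (∀ p ∈ Y, ∀ q ∈ Y, (∃ c : K, c ≠ 0 ∧ p = c • q) → p = q)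

/-- The homogeneous vanishing ideal of a set of points in `P^N`. -/
def vIdeal1 {N : ℕ} (Y : Finset (Fin (N+1) → K)) : Ideal (PRing K N) :=
  Ideal.span {F | (∃ d, IsHom1 K F d) ∧ ∀ q ∈ Y, eval q F = 0}

/-- The degree-`d` piece of `K[X_0,…,X_N]/I`. -/
def degPiece1 {N : ℕ} (I : Ideal (PRing K N)) (d : ℤ) :
    Submodule K (PRing K N ⧸ I) :=
  (weightedHomogeneousSubmodule K (wt1 N) d).map
    (Ideal.Quotient.mkₐ K I).toLinearMap

/-- The Hilbert function of a set of points in `P^N`. -/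
def HF1 {N : ℕ} (Y : Finset (Fin (N+1) → K)) (d : ℤ) : ℕ :=
  Module.finrank K (degPiece1 K (vIdeal1 K Y) d)

/-- The Hilbert function of a homogeneous ideal of `K[X_0,…,X_N]/I`. -/
def HFIdeal1 {N : ℕ} (I : Ideal (PRing K N)) (J : Ideal (PRing K N ⧸ I))
    (d : ℤ) : ℕ :=
  Module.finrank K ↥((Submodule.restrictScalars K J) ⊓ degPiece1 K I d)

/-- The degree `deg_Y(q)` of a point `q` in `Y ⊆ P^N`: the minimal degree of
a homogeneous separator of `q` in `Y`. -/
def deg1 {N : ℕ} (Y : Finset (Fin (N+1) → K)) (q : Fin (N+1) → K) : ℕ :=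
  sInf {d : ℕ | ∃ F : PRing K N, IsHom1 K F (d : ℤ) ∧ eval q F ≠ 0 ∧
    ∀ q' ∈ Y, q' ≠ q → eval q' F = 0}

/-- The regularity index of the Hilbert function of `Y ⊆ P^N`. -/
def regIndex1 {N : ℕ} (Y : Finset (Fin (N+1) → K)) : ℕ :=
  sInf {r : ℕ | ∀ i : ℕ, r ≤ i → HF1 K Y (i : ℤ) = Y.card}

/-- `Y ⊆ P^N` is a Cayley-Bacharach scheme. -/
def IsCB1 {N : ℕ} (Y : Finset (Fin (N+1) → K)) : Prop :=
  ∀ q ∈ Y, deg1 K Y q = regIndex1 K Y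

/- ### Kähler differents -/

/-- The variables `X_1,…,X_m,Y_1,…,Y_n` indexed by `Fin (m+n)`. -/
def bvar (m n : ℕ) (v : Fin (m+n)) : Fin (m+1) ⊕ Fin (n+1) :=
  if h : (v : ℕ) < m then Sum.inl ⟨(v : ℕ) + 1, by omega⟩
  else Sum.inr ⟨(v : ℕ) - m + 1, by have hv := v.isLt; omega⟩

/-- The Kähler different of `R = S/I` w.r.t. a system of generators `F` of
`I`: the ideal generated by the `(m+n)×(m+n)`-minors of the Jacobian matrix
`(∂F_k/∂X_i, ∂F_k/∂Y_j)`. -/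
def kdiffB (I : Ideal (BiRing K m n)) {r : ℕ} (F : Fin r → BiRing K m n) :
    Ideal (BiRing K m n ⧸ I) :=
  Ideal.span (Set.range fun ρ : Fin (m+n) → Fin r =>
    Ideal.Quotient.mk I (Matrix.det (Matrix.of fun u v : Fin (m+n) =>
      pderiv (bvar m n v) (F (ρ u)))))

/-- The Kähler different of `K[X_0,…,X_N]/I` w.r.t. a system of generators
`F` of `I` (minors w.r.t. the variables `X_1,…,X_N`). -/
def kdiff1 {N : ℕ} (I : Ideal (PRing K N)) {r : ℕ} (F : Fin r → PRing K N) :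
    Ideal (PRing K N ⧸ I) :=
  Ideal.span (Set.range fun ρ : Fin N → Fin r =>
    Ideal.Quotient.mk I (Matrix.det (Matrix.of fun u v : Fin N =>
      pderiv (Fin.succ v) (F (ρ u)))))

/-- The extension `ϑ_{𝕏₁} R_𝕏` to `R_𝕏 = S/I` of the Kähler different of
`𝕏₁ ⊆ P^m` computed from a system of generators `F` of `I_{𝕏₁}`. -/
def kdiffExtL (I : Ideal (BiRing K m n)) {r : ℕ} (F : Fin r → PRing K m) :
    Ideal (BiRing K m n ⧸ I) :=
  Ideal.span (Set.range fun ρ : Fin m → Fin r =>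
    Ideal.Quotient.mk I (rename Sum.inl (Matrix.det (Matrix.of fun u v : Fin m =>
      pderiv (Fin.succ v) (F (ρ u))))))

/-- The extension `ϑ_{𝕏₂} R_𝕏` to `R_𝕏 = S/I` of the Kähler different of
`𝕏₂ ⊆ P^n` computed from a system of generators `G` of `I_{𝕏₂}`. -/
def kdiffExtR (I : Ideal (BiRing K m n)) {r : ℕ} (G : Fin r → PRing K n) :
    Ideal (BiRing K m n ⧸ I) :=
  Ideal.span (Set.range fun ρ : Fin n → Fin r =>
    Ideal.Quotient.mk I (rename Sum.inr (Matrix.det (Matrix.of fun u v : Fin n =>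
      pderiv (Fin.succ v) (G (ρ u))))))

/- ### Regular sequences, ACM, complete intersections -/

/-- `a, b` form a regular sequence. -/
def RegPair {A : Type*} [CommRing A] (a b : A) : Prop :=
  (∀ z : A, a * z = 0 → z = 0) ∧
  (∀ z : A, b * z ∈ Ideal.span {a} → z ∈ Ideal.span {a})

/-- The image `x₀` of `X_0` in `S/I`. -/
def x0B (I : Ideal (BiRing K m n)) : BiRing K m n ⧸ I :=
  Ideal.Quotient.mk I (MvPolynomial.X (Sum.inl 0))

/-- The image `y₀` of `Y_0` in `S/I`. -/
def y0B (I : Ideal (BiRing K m n)) : BiRing K m n ⧸ I :=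
  Ideal.Quotient.mk I (MvPolynomial.X (Sum.inr 0))

/-- The standing assumption for ACM sets of points: (after a change of
coordinates) `x₀, y₀` form a regular sequence in `R_𝕏`. -/
def ACMxy (𝕏 : Finset (BiPt K m n)) : Prop :=
  RegPair (x0B K (vIdealB K 𝕏)) (y0B K (vIdealB K 𝕏))

/-- `𝕏` is arithmetically Cohen-Macaulay: some bihomogeneous linear forms
`ℓ` of degree `(1,0)` and `ℓ'` of degree `(0,1)` give a regular sequence in
`R_𝕏` (for points this is equivalent to `depth R_𝕏 = 2`). -/
def IsACM (𝕏 : Finset (BiPt K m n)) : Prop :=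
  ∃ l l' : BiRing K m n, IsBihom K l (1, 0) ∧ IsBihom K l' (0, 1) ∧
    RegPair (Ideal.Quotient.mk (vIdealB K 𝕏) l) (Ideal.Quotient.mk (vIdealB K 𝕏) l')

/-- A regular sequence in a commutative ring, given as a list:
each entry is a non-zerodivisor modulo the preceding ones, and the list
generates a proper ideal. -/
def IsRegSeq {A : Type*} [CommRing A] (l : List A) : Prop :=
  (∀ (i : ℕ) (h : i < l.length), ∀ z : A,
      l.get ⟨i, h⟩ * z ∈ Ideal.span {x | x ∈ l.take i} →
      z ∈ Ideal.span {x | x ∈ l.take i}) ∧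
  Ideal.span {x | x ∈ l} ≠ ⊤

/-- `𝕏` is a complete intersection of type `(d_1,…,d_m,d'_1,…,d'_n)`. -/
def IsCIB (𝕏 : Finset (BiPt K m n)) (d : Fin m → ℕ) (d' : Fin n → ℕ) : Prop :=
  ∃ (F : Fin m → BiRing K m n) (G : Fin n → BiRing K m n),
    (∀ i, IsBihom K (F i) ((d i : ℤ), 0)) ∧
    (∀ j, IsBihom K (G j) (0, (d' j : ℤ))) ∧
    IsRegSeq (List.ofFn F ++ List.ofFn G) ∧
    Ideal.span (Set.range F ∪ Set.range G) = vIdealB K 𝕏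

/-- `Y ⊆ P^N` is a complete intersection of type `(d_1,…,d_N)`. -/
def IsCI1 {N : ℕ} (Y : Finset (Fin (N+1) → K)) (d : Fin N → ℕ) : Prop :=
  ∃ F : Fin N → PRing K N,
    (∀ i, IsHom1 K (F i) (d i : ℤ)) ∧
    IsRegSeq (List.ofFn F) ∧
    Ideal.span (Set.range F) = vIdeal1 K Y

/- ### Separators and the Cayley-Bacharach property -/

/-- `F` is a separator of `p` in `𝕏`. -/
def IsSepB (𝕏 : Finset (BiPt K m n)) (p : BiPt K m n) (F : BiRing K m n) : Prop :=
  evalB K p F ≠ 0 ∧ ∀ q ∈ 𝕏, q ≠ p → evalB K q F = 0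

/-- The set of degrees of bihomogeneous separators of `p` in `𝕏`. -/
def sepDegsB (𝕏 : Finset (BiPt K m n)) (p : BiPt K m n) : Set (ℤ × ℤ) :=
  {d | ∃ F, IsBihom K F d ∧ IsSepB K 𝕏 p F}

/-- `deg_𝕏(p)`: the set of degrees of minimal separators of `p` in `𝕏`
(mimimality w.r.t. the componentwise order). -/
def minSepDegsB (𝕏 : Finset (BiPt K m n)) (p : BiPt K m n) : Set (ℤ × ℤ) :=
  {d ∈ sepDegsB K 𝕏 p | ∀ d' ∈ sepDegsB K 𝕏 p, ¬ d' < d}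

/-- `𝕏` has the Cayley-Bacharach property: the Hilbert function of
`𝕏 \ {p}` is independent of the choice of `p ∈ 𝕏`. -/
def HasCB (𝕏 : Finset (BiPt K m n)) : Prop :=
  ∀ p ∈ 𝕏, ∀ q ∈ 𝕏, ∀ d : ℤ × ℤ, HFB K (𝕏.erase p) d = HFB K (𝕏.erase q) d

/- ### Star property and fibres -/

/-- The `(⋆)`-property. -/
def StarProp (𝕏 : Finset (BiPt K m n)) : Prop :=
  ∀ p ∈ 𝕏, ∀ q ∈ 𝕏, ((p.1, q.2) ∈ 𝕏 ∨ (q.1, p.2) ∈ 𝕏)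

/-- `V_j = π₁(π₂⁻¹(q'_j) ∩ 𝕏)` for `q'_j = p.2`. -/
def Vset (𝕏 : Finset (BiPt K m n)) (p : BiPt K m n) : Finset (Fin (m+1) → K) :=
  (𝕏.filter fun q => q.2 = p.2).image Prod.fst

/-- `W_i = π₂(π₁⁻¹(q_i) ∩ 𝕏)` for `q_i = p.1`. -/
def Wset (𝕏 : Finset (BiPt K m n)) (p : BiPt K m n) : Finset (Fin (n+1) → K) :=
  (𝕏.filter fun q => q.1 = p.1).image Prod.snd

end MultiProjPoints

/- A separator of `p` makes the Hilbert function of `𝕏 \ {p}` drop by one in its degree, so the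
Cayley-Bacharach property says that all points have the same separator degrees. The `(⋆)`-property
makes these degrees a product: `p = (q, q')` has a separator of bidegree `(d, e)` in `𝕏` exactly
when `q` has one of degree `d` in the fibre `V` through `p` and `q'` has one of degree `e` in the
fibre `W`. The separator degrees of `p` are therefore the quadrant above `(deg_V q, deg_W q')`.
On `P^1` a separator of a point of `V` is a binary form vanishing at the `|V| - 1` other points, so
`deg_V q = |V| - 1`. Hence the Cayley-Bacharach property forces all the fibres `V` to have the same
cardinality; as `(⋆)` makes them a chain, they coincide and `𝕏` is a product. For a product the
quadrants agree precisely when both factors are Cayley-Bacharach schemes, and on `P^1` every finite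
set is one. -/

namespace MultiProjPoints

section LinearAlgebra

variable {k M V W : Type*} [Field k] [AddCommGroup M] [Module k M] [AddCommGroup V] [Module k V]
  [AddCommGroup W] [Module k W]

theorem finrank_map_eq_of_ker_iff (A : Submodule k M) (f : M →ₗ[k] V) (g : M →ₗ[k] W)
    (h : ∀ x ∈ A, f x = 0 ↔ g x = 0) :
    Module.finrank k (A.map f) = Module.finrank k (A.map g) := by
  have hker : LinearMap.ker (f.domRestrict A) = LinearMap.ker (g.domRestrict A) :=
    SetLike.ext fun x => by simpa using h x x.2
  rw [← LinearMap.range_domRestrict, ← LinearMap.range_domRestrict,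
    ← (f.domRestrict A).quotKerEquivRange.finrank_eq,
    ← (g.domRestrict A).quotKerEquivRange.finrank_eq, hker]

theorem finrank_map_add_finrank_inf_ker [FiniteDimensional k V] (A : Submodule k V)
    (f : V →ₗ[k] W) :
    Module.finrank k (A.map f) + Module.finrank k (A ⊓ LinearMap.ker f : Submodule k V) =
      Module.finrank k A := by
  have h := (f.domRestrict A).finrank_range_add_finrank_ker
  rwa [LinearMap.range_domRestrict, LinearMap.ker_domRestrict, ← Submodule.finrank_map_subtype_eq,
    Submodule.map_comap_subtype] at h

open Classical in
theorem finrank_inf_span_singleton (A : Submodule k V) {v : V} (hv : v ≠ 0) :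
    Module.finrank k (A ⊓ Submodule.span k {v} : Submodule k V) = if v ∈ A then 1 else 0 := by
  split_ifs with h
  · rw [inf_eq_right.2 ((Submodule.span_singleton_le_iff_mem v A).2 h), finrank_span_singleton hv]
  · rw [((Submodule.disjoint_span_singleton' hv).2 h).eq_bot, finrank_bot]

theorem finrank_eq_card_iff_single_mem {ι : Type*} [Fintype ι] [DecidableEq ι]
    (A : Submodule k (ι → k)) :
    Module.finrank k A = Fintype.card ι ↔ ∀ i, Pi.single i 1 ∈ A := by
  constructor
  · intro h i
    have htop : A = ⊤ :=
      Submodule.eq_top_of_finrank_eq (h.trans (Module.finrank_fintype_fun_eq_card k).symm)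
    exact htop ▸ Submodule.mem_top
  · intro h
    have htop : A = ⊤ := by
      rw [eq_top_iff, ← (Pi.basisFun k ι).span_eq, Submodule.span_le, Set.range_subset_iff]
      simpa only [Pi.basisFun_apply, SetLike.mem_coe] using h
    rw [htop, finrank_top, Module.finrank_fintype_fun_eq_card]

theorem ker_funLeft_erase {ι : Type*} [DecidableEq ι] {X : Finset ι} {p : ι} (hp : p ∈ X) :
    LinearMap.ker (LinearMap.funLeft k k (Set.inclusion (Finset.coe_subset.2 (X.erase_subset p)))) =
      Submodule.span k {(Pi.single ⟨p, hp⟩ 1 : X → k)} := by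
  ext u
  simp only [LinearMap.mem_ker, Submodule.mem_span_singleton]
  constructor
  · intro hu
    refine ⟨u ⟨p, hp⟩, funext fun x => ?_⟩
    rw [Pi.smul_apply, smul_eq_mul]
    by_cases hx : x = ⟨p, hp⟩
    · rw [hx, Pi.single_eq_same, mul_one]
    · rw [Pi.single_eq_of_ne hx, mul_zero]
      have hxp : x.1 ≠ p := fun h => hx (Subtype.ext h)
      exact (congrFun hu ⟨x, Finset.mem_erase.2 ⟨hxp, x.2⟩⟩).symm
  · rintro ⟨c, rfl⟩
    refine funext fun x => ?_
    have hx : Set.inclusion (Finset.coe_subset.2 (X.erase_subset p)) x ≠ ⟨p, hp⟩ := fun h =>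
      Finset.ne_of_mem_erase x.2 (congrArg Subtype.val h)
    rw [LinearMap.funLeft_apply, Pi.smul_apply, Pi.single_eq_of_ne hx, smul_zero, Pi.zero_apply]

end LinearAlgebra

section WeightedHomogeneous

variable {R σ τ : Type*} [CommSemiring R]

theorem isWeightedHomogeneous_bind₁ {M M' : Type*} [AddCommMonoid M] [AddCommMonoid M']
    {w : σ → M} {w' : τ → M'} (φ : M →+ M') {g : σ → MvPolynomial τ R}
    (hg : ∀ i, IsWeightedHomogeneous w' (g i) (φ (w i))) {F : MvPolynomial σ R} {d : M}
    (hF : IsWeightedHomogeneous w F d) : IsWeightedHomogeneous w' (bind₁ g F) (φ d) := by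
  rw [← aeval_eq_bind₁, aeval_def, eval₂_eq]
  refine IsWeightedHomogeneous.sum _ _ _ fun s hs => ?_
  have hd : φ d = ∑ i ∈ s.support, s i • φ (w i) := by
    simp only [← hF (mem_support_iff.1 hs), Finsupp.weight_apply, Finsupp.sum, map_sum, map_nsmul]
  rw [hd]
  exact (IsWeightedHomogeneous.prod _ _ _ fun i _ => (hg i).pow _).C_mul _

theorem eval_bind₁ (x : τ → R) (g : σ → MvPolynomial τ R) (F : MvPolynomial σ R) :
    eval x (bind₁ g F) = eval (fun i => eval x (g i)) F :=
  eval₂Hom_bind₁ (RingHom.id R) x g F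

theorem eval_smul_of_isHomogeneous {F : MvPolynomial σ R} {d : ℕ} (hF : F.IsHomogeneous d) (c : R)
    (x : σ → R) : eval (c • x) F = c ^ d * eval x F := by
  rw [eval_eq, eval_eq, Finset.mul_sum]
  refine Finset.sum_congr rfl fun s hs => ?_
  have hdeg : ∑ i ∈ s.support, s i = d := by
    rw [← Finsupp.degree_apply, Finsupp.degree_eq_weight_one]
    exact hF (mem_support_iff.1 hs)
  simp only [Pi.smul_apply, smul_eq_mul, mul_pow, Finset.prod_mul_distrib,
    Finset.prod_pow_eq_pow_sum, hdeg]
  ring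

theorem aeval_eq_sum_prod_toMultiset {S : Type*} [CommSemiring S] [Algebra R S] (g : σ → S)
    (F : MvPolynomial σ R) : aeval g F =
      ∑ s ∈ F.support, algebraMap R S (F.coeff s) * ((Finsupp.toMultiset s).map g).prod := by
  rw [aeval_def, eval₂_eq]
  refine Finset.sum_congr rfl fun s _ => ?_
  rw [Finsupp.toMultiset_map, Finsupp.prod_toMultiset,
    Finsupp.prod_mapDomain_index (fun _ => pow_zero _) fun _ _ _ => pow_add _ _ _, Finsupp.prod]

theorem coeff_aeval_linear_of_isHomogeneous {F : MvPolynomial σ R} {d : ℕ}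
    (hF : F.IsHomogeneous d) (x y : σ → R) :
    (aeval (fun i => Polynomial.C (x i) * Polynomial.X + Polynomial.C (y i)) F).coeff d =
      eval x F := by
  rw [← aeval_eq_eval, aeval_eq_sum_prod_toMultiset, aeval_eq_sum_prod_toMultiset,
    Polynomial.finsetSum_coeff]
  refine Finset.sum_congr rfl fun s hs => ?_
  have hdeg : Multiset.card (Finsupp.toMultiset s) = d := by
    rw [Finsupp.card_toMultiset, ← hF (mem_support_iff.1 hs), Finsupp.weight_apply]
    simp only [Pi.one_apply, smul_eq_mul, mul_one, Function.id_def]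
  have hlin : ∀ f ∈ (Finsupp.toMultiset s).map fun i =>
      Polynomial.C (x i) * Polynomial.X + Polynomial.C (y i), f.natDegree ≤ 1 := by
    simp only [Multiset.forall_mem_map_iff, Polynomial.natDegree_linear_le, implies_true]
  have hcoeff := Polynomial.coeff_multiset_prod_of_natDegree_le _ 1 hlin
  rw [Multiset.card_map, hdeg, mul_one, Multiset.map_map] at hcoeff
  rw [Polynomial.algebraMap_eq, Polynomial.coeff_C_mul, hcoeff]
  simp

theorem eval_aeval_linear (F : MvPolynomial σ R) (x y : σ → R) (t : R) :
    (aeval (fun i => Polynomial.C (x i) * Polynomial.X + Polynomial.C (y i)) F).eval t =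
      eval (t • x + y) F := by
  rw [← Polynomial.coe_aeval_eq_eval, ← AlgHom.comp_apply, comp_aeval, aeval_eq_eval]
  congr 2
  funext i
  simp [mul_comm t]

end WeightedHomogeneous

section HilbertFunction

variable {k σ M ι : Type*} [Field k] [AddCommMonoid M]

/-- The Hilbert function, in the grading of `k[σ]` by the weights `w`, of the finite set of points
with representatives `P x`, `x ∈ X`. It specialises to `HFB` and to `HF1`. -/
def hilbertFunction (w : σ → M) (P : ι → σ → k) (X : Finset ι) (d : M) : ℕ :=
  Module.finrank k ((weightedHomogeneousSubmodule k w d).map (Ideal.Quotient.mkₐ k (Ideal.span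
    {F | (∃ e, IsWeightedHomogeneous w F e) ∧ ∀ x ∈ X, eval (P x) F = 0})).toLinearMap)

/-- The degrees, with respect to the weights `w`, of the weighted homogeneous separators of `P p`
in the set of points `P x`, `x ∈ X`. It specialises to `sepDegsB` and to `sepDegs1`. -/
def separatorDegrees (w : σ → M) (P : ι → σ → k) (X : Finset ι) (p : ι) : Set M :=
  {d | ∃ F, IsWeightedHomogeneous w F d ∧ eval (P p) F ≠ 0 ∧ ∀ q ∈ X, q ≠ p → eval (P q) F = 0}

/-- The linear map sending a polynomial to its values at the points `P x`, `x ∈ X`. -/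
def evalOn (P : ι → σ → k) (X : Finset ι) : MvPolynomial σ k →ₗ[k] (X → k) :=
  LinearMap.pi fun x => (aeval (P x)).toLinearMap

theorem evalOn_apply (P : ι → σ → k) (X : Finset ι) (F : MvPolynomial σ k) (x : X) :
    evalOn P X F x = eval (P x) F := by
  simp only [evalOn, LinearMap.pi_apply, AlgHom.toLinearMap_apply, aeval_eq_eval]

theorem hilbertFunction_eq_finrank_map_evalOn (w : σ → M) (P : ι → σ → k) (X : Finset ι) (d : M) :
    hilbertFunction w P X d =
      Module.finrank k ((weightedHomogeneousSubmodule k w d).map (evalOn P X)) := by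
  refine finrank_map_eq_of_ker_iff _ _ _ fun F hF => ?_
  have hev : evalOn P X F = 0 ↔ ∀ x ∈ X, eval (P x) F = 0 := by
    simp only [funext_iff, evalOn_apply, Pi.zero_apply, Subtype.forall]
  rw [AlgHom.toLinearMap_apply, Ideal.Quotient.mkₐ_eq_mk, Ideal.Quotient.eq_zero_iff_mem, hev]
  refine ⟨fun h x hx => ?_, fun h => Ideal.subset_span ⟨⟨d, hF⟩, h⟩⟩
  exact Ideal.span_le (I := RingHom.ker (eval (P x))).2 (fun G hG => hG.2 x hx) h

theorem single_mem_map_evalOn_iff [DecidableEq ι] {w : σ → M} {P : ι → σ → k} {X : Finset ι}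
    {d : M} (p : X) :
    Pi.single p 1 ∈ (weightedHomogeneousSubmodule k w d).map (evalOn P X) ↔
      d ∈ separatorDegrees w P X p := by
  constructor
  · rintro ⟨F, hF, hval⟩
    have heval (x : X) : eval (P x) F = (Pi.single p 1 : X → k) x := by rw [← hval, evalOn_apply]
    refine ⟨F, hF, ?_, fun q hq hqp => ?_⟩
    · rw [heval, Pi.single_eq_same]
      exact one_ne_zero
    · rw [heval ⟨q, hq⟩, Pi.single_eq_of_ne (Subtype.coe_ne_coe.1 hqp)]
  · rintro ⟨F, hF, hp, hX⟩
    refine ⟨(eval (P p) F)⁻¹ • F, Submodule.smul_mem _ _ hF, funext fun x => ?_⟩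
    rw [map_smul, Pi.smul_apply, evalOn_apply, smul_eq_mul]
    by_cases hx : x = p
    · rw [hx, Pi.single_eq_same, inv_mul_cancel₀ hp]
    · rw [hX x x.2 (Subtype.coe_ne_coe.2 hx), Pi.single_eq_of_ne hx, mul_zero]

theorem hilbertFunction_eq_card_iff {w : σ → M} {P : ι → σ → k} {X : Finset ι} {d : M} :
    hilbertFunction w P X d = X.card ↔ ∀ p ∈ X, d ∈ separatorDegrees w P X p := by
  classical
  rw [hilbertFunction_eq_finrank_map_evalOn, ← Fintype.card_coe, finrank_eq_card_iff_single_mem]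
  simp only [single_mem_map_evalOn_iff, Subtype.forall]

variable [DecidableEq ι]

open Classical in
theorem hilbertFunction_erase_add (w : σ → M) (P : ι → σ → k) {X : Finset ι} {p : ι} (hp : p ∈ X)
    (d : M) :
    hilbertFunction w P (X.erase p) d + (if d ∈ separatorDegrees w P X p then 1 else 0) =
      hilbertFunction w P X d := by
  have hsingle : (Pi.single ⟨p, hp⟩ 1 : X → k) ≠ 0 := by
    simp only [ne_eq, Pi.single_eq_zero_iff, one_ne_zero, not_false_eq_true]
  have h := finrank_map_add_finrank_inf_ker
    ((weightedHomogeneousSubmodule k w d).map (evalOn P X))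
    (LinearMap.funLeft k k (Set.inclusion (Finset.coe_subset.2 (X.erase_subset p))))
  rw [ker_funLeft_erase hp, finrank_inf_span_singleton _ hsingle, ← Submodule.map_comp] at h
  simp only [single_mem_map_evalOn_iff] at h
  simp only [hilbertFunction_eq_finrank_map_evalOn]
  exact h

theorem hilbertFunction_erase_eq_iff {w : σ → M} {P : ι → σ → k} {X : Finset ι} {p q : ι}
    (hp : p ∈ X) (hq : q ∈ X) :
    (∀ d, hilbertFunction w P (X.erase p) d = hilbertFunction w P (X.erase q) d) ↔
      separatorDegrees w P X p = separatorDegrees w P X q := by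
  classical
  rw [Set.ext_iff]
  refine forall_congr' fun d => ?_
  have hpd := hilbertFunction_erase_add w P hp d
  have hqd := hilbertFunction_erase_add w P hq d
  have hdrop : ((if d ∈ separatorDegrees w P X p then 1 else 0) =
      if d ∈ separatorDegrees w P X q then 1 else 0) ↔
      (d ∈ separatorDegrees w P X p ↔ d ∈ separatorDegrees w P X q) := by
    split_ifs <;> simp [*]
  rw [← hdrop]
  omega

end HilbertFunction

variable {K : Type} [Field K]

section ProjectiveSpace

variable {N : ℕ} {Y : Finset (Fin (N + 1) → K)} {q : Fin (N + 1) → K}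

/-- The degrees of the homogeneous separators of `q` in `Y ⊆ P^N`; `deg1` is the least of them. They
are taken in `ℤ` because the bigrading of `P^m × P^n` has integer components. -/
def sepDegs1 (Y : Finset (Fin (N + 1) → K)) (q : Fin (N + 1) → K) : Set ℤ :=
  separatorDegrees (wt1 N) id Y q

theorem isHom1_natCast_iff {F : PRing K N} {d : ℕ} : IsHom1 K F (d : ℤ) ↔ F.IsHomogeneous d := by
  have hweight (s : Fin (N + 1) →₀ ℕ) :
      Finsupp.weight (wt1 N) s = (Finsupp.weight (1 : Fin (N + 1) → ℕ) s : ℤ) := by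
    simp only [Finsupp.weight_apply, Finsupp.sum, wt1, Pi.one_apply, smul_eq_mul, mul_one,
      nsmul_eq_mul, Nat.cast_sum]
  simp only [IsHom1, IsHomogeneous, IsWeightedHomogeneous, hweight, Nat.cast_inj]

theorem exists_natCast_eq_of_isHom1 {F : PRing K N} {d : ℤ} (hF : IsHom1 K F d) (h0 : F ≠ 0) :
    ∃ e : ℕ, (e : ℤ) = d := by
  obtain ⟨s, hs⟩ := ne_zero_iff.1 h0
  refine ⟨∑ i ∈ s.support, s i, ?_⟩
  simp only [← hF hs, Finsupp.weight_apply, Finsupp.sum, wt1, nsmul_eq_mul, mul_one, Nat.cast_sum]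

theorem exists_isHom1_one_separating {r : Fin (N + 1) → K} (h : ∀ c : K, q ≠ c • r) :
    ∃ l : PRing K N, IsHom1 K l 1 ∧ eval q l ≠ 0 ∧ eval r l = 0 := by
  have hq : q ∉ Submodule.span K {r} := fun hmem =>
    let ⟨c, hc⟩ := Submodule.mem_span_singleton.1 hmem
    h c hc.symm
  obtain ⟨f, hfq, hr⟩ := Submodule.exists_le_ker_of_notMem hq
  have hfr : f r = 0 := hr (Submodule.mem_span_singleton_self r)
  have heval (x : Fin (N + 1) → K) :
      eval x (∑ i, C (f (Pi.single i 1)) * X i : PRing K N) = f x := by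
    conv_rhs => rw [pi_eq_sum_univ' x]
    simp only [map_sum, map_mul, eval_C, eval_X, map_smul, smul_eq_mul, mul_comm]
  refine ⟨∑ i, C (f (Pi.single i 1)) * X i, ?_, by rwa [heval], by rwa [heval]⟩
  exact IsWeightedHomogeneous.sum _ _ _ fun i _ => (isWeightedHomogeneous_X K _ i).C_mul _

theorem GoodSet.ne_smul (hY : GoodSet K Y) {r : Fin (N + 1) → K} (hq : q ∈ Y) (hr : r ∈ Y)
    (hqr : q ≠ r) (c : K) : q ≠ c • r := by
  rintro hc
  rcases eq_or_ne c 0 with rfl | hc0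
  · exact hY.1 q hq (hc.trans (zero_smul K r))
  · exact hqr (hY.2 q hq r hr ⟨c, hc0, hc⟩)

theorem GoodSet.subset (hY : GoodSet K Y) {Z : Finset (Fin (N + 1) → K)} (hZ : Z ⊆ Y) :
    GoodSet K Z :=
  ⟨fun q hq => hY.1 q (hZ hq), fun p hp q hq => hY.2 p (hZ hp) q (hZ hq)⟩

theorem exists_natCast_eq_of_mem_sepDegs1 {d : ℤ} (hd : d ∈ sepDegs1 Y q) :
    ∃ e : ℕ, (e : ℤ) = d := by
  obtain ⟨F, hF, hq, -⟩ := hd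
  refine exists_natCast_eq_of_isHom1 hF ?_
  rintro rfl
  exact hq (map_zero _)

theorem isUpperSet_sepDegs1 (hq : q ≠ 0) : IsUpperSet (sepDegs1 Y q) := by
  rintro d e hde ⟨F, hF, hFq, hFY⟩
  obtain ⟨i, hi⟩ := Function.ne_iff.1 hq
  obtain ⟨k, rfl⟩ := Int.le.dest hde
  refine ⟨F * X i ^ k, ?_, ?_, fun r hr hrq => ?_⟩
  · simpa [wt1] using hF.mul ((isWeightedHomogeneous_X K (wt1 N) i).pow k)
  · rw [map_mul, map_pow, eval_X]
    exact mul_ne_zero hFq (pow_ne_zero k hi)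
  · rw [map_mul, hFY r hr hrq, zero_mul]

theorem card_sub_one_mem_sepDegs1 (hY : GoodSet K Y) (hq : q ∈ Y) :
    ((Y.card - 1 : ℕ) : ℤ) ∈ sepDegs1 Y q := by
  classical
  have hline : ∀ r ∈ Y.erase q, ∃ l : PRing K N, IsHom1 K l 1 ∧ eval q l ≠ 0 ∧ eval r l = 0 :=
    fun r hr => exists_isHom1_one_separating
      (hY.ne_smul hq (Finset.mem_of_mem_erase hr) (Finset.ne_of_mem_erase hr).symm)
  choose! l hl hlq hlr using hline
  refine ⟨∏ r ∈ Y.erase q, l r, ?_, ?_, fun r hr hrq => ?_⟩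
  · have h := IsWeightedHomogeneous.prod (Y.erase q) l (fun _ => (1 : ℤ)) hl
    rwa [Finset.sum_const, Finset.card_erase_of_mem hq, nsmul_one] at h
  · rw [map_prod]
    exact Finset.prod_ne_zero_iff.2 hlq
  · have hr' : r ∈ Y.erase q := Finset.mem_erase.2 ⟨hrq, hr⟩
    rw [map_prod]
    exact Finset.prod_eq_zero hr' (hlr r hr')

theorem deg1_mem_sepDegs1 (hY : GoodSet K Y) (hq : q ∈ Y) : (deg1 K Y q : ℤ) ∈ sepDegs1 Y q :=
  Nat.sInf_mem (s := {d : ℕ | (d : ℤ) ∈ sepDegs1 Y q}) ⟨_, card_sub_one_mem_sepDegs1 hY hq⟩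

theorem deg1_le_of_mem_sepDegs1 {d : ℕ} (hd : (d : ℤ) ∈ sepDegs1 Y q) : deg1 K Y q ≤ d :=
  Nat.sInf_le (s := {d : ℕ | (d : ℤ) ∈ sepDegs1 Y q}) hd

theorem sepDegs1_eq_Ici (hY : GoodSet K Y) (hq : q ∈ Y) :
    sepDegs1 Y q = Set.Ici (deg1 K Y q : ℤ) := by
  refine Set.Subset.antisymm (fun d hd => ?_) fun d hd =>
    isUpperSet_sepDegs1 (hY.1 q hq) hd (deg1_mem_sepDegs1 hY hq)
  obtain ⟨e, rfl⟩ := exists_natCast_eq_of_mem_sepDegs1 hd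
  exact Int.ofNat_le.2 (deg1_le_of_mem_sepDegs1 hd)

theorem HF1_eq_card_iff (hY : GoodSet K Y) {d : ℕ} :
    HF1 K Y d = Y.card ↔ Y.sup (deg1 K Y) ≤ d := by
  classical
  rw [Finset.sup_le_iff]
  refine hilbertFunction_eq_card_iff.trans (forall₂_congr fun q hq => ?_)
  change (d : ℤ) ∈ sepDegs1 Y q ↔ _
  rw [sepDegs1_eq_Ici hY hq, Set.mem_Ici, Nat.cast_le]

theorem regIndex1_eq_sup_deg1 (hY : GoodSet K Y) : regIndex1 K Y = Y.sup (deg1 K Y) := by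
  have hset : {r : ℕ | ∀ i : ℕ, r ≤ i → HF1 K Y i = Y.card} = Set.Ici (Y.sup (deg1 K Y)) := by
    ext r
    simp only [HF1_eq_card_iff hY, Set.mem_ofPred_eq, Set.mem_Ici]
    exact ⟨fun h => h r le_rfl, fun h i => h.trans⟩
  rw [regIndex1, hset, csInf_Ici]

theorem isCB1_iff_deg1_eq (hY : GoodSet K Y) :
    IsCB1 K Y ↔ ∀ p ∈ Y, ∀ q ∈ Y, deg1 K Y p = deg1 K Y q := by
  rw [IsCB1, regIndex1_eq_sup_deg1 hY]
  refine ⟨fun h p hp q hq => (h p hp).trans (h q hq).symm, fun h q hq => ?_⟩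
  exact le_antisymm (Finset.le_sup hq) (Finset.sup_le fun p hp => (h p hp q hq).le)

end ProjectiveSpace

section ProjectiveLine

variable {Y : Finset (Fin 2 → K)} {q : Fin 2 → K}

theorem exists_eq_smul_add_smul (hq : q ≠ 0) : ∃ w : Fin 2 → K, ∀ r, ∃ a b : K,
    r = a • q + b • w := by
  obtain ⟨i, hi⟩ := Function.ne_iff.1 hq
  refine ⟨Pi.single (1 - i) 1, fun r => ⟨r i / q i, r (1 - i) - r i / q i * q (1 - i), ?_⟩⟩
  have hi' : q i ≠ 0 := hi
  funext j
  by_cases hj : j = i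
  · have hne : 1 - i ≠ i := by omega
    simp [hj, hne, hi']
  · have hj' : j = 1 - i := by omega
    simp [hj']

theorem GoodSet.exists_smul_add_eq_smul (hY : GoodSet K (N := 1) Y) (hq : q ∈ Y) :
    ∃ w : Fin 2 → K, ∀ r ∈ Y, r ≠ q → ∃ s c : K, c ≠ 0 ∧ s • q + w = c • r := by
  obtain ⟨w, hw⟩ := exists_eq_smul_add_smul (hY.1 q hq)
  refine ⟨w, fun r hr hrq => ?_⟩
  obtain ⟨a, b, hab⟩ := hw r
  have hb : b ≠ 0 := by
    rintro rfl
    exact hY.ne_smul hr hq hrq a (by simpa using hab)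
  refine ⟨b⁻¹ * a, b⁻¹, inv_ne_zero hb, ?_⟩
  rw [hab, smul_add, smul_smul, smul_smul, inv_mul_cancel₀ hb, one_smul]

/- The points of the line other than `q` are `s • q + w` with `w` fixed and `s ∈ K`, and `F`
restricts to a polynomial in `s` with leading coefficient `F(q)`. -/
theorem card_erase_le_of_isHomogeneous [DecidableEq K] (hY : GoodSet K (N := 1) Y) (hq : q ∈ Y)
    {F : MvPolynomial (Fin 2) K} {d : ℕ} (hF : F.IsHomogeneous d) (hFq : eval q F ≠ 0)
    (hFY : ∀ r ∈ Y, r ≠ q → eval r F = 0) : (Y.erase q).card ≤ d := by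
  obtain ⟨w, hw⟩ := hY.exists_smul_add_eq_smul hq
  have hline : ∀ r ∈ Y.erase q, ∃ s c : K, c ≠ 0 ∧ s • q + w = c • r := fun r hr =>
    hw r (Finset.mem_of_mem_erase hr) (Finset.ne_of_mem_erase hr)
  choose! s c hc hs using hline
  have hinj : Set.InjOn s (Y.erase q) := by
    intro r hr r' hr' hss
    by_contra hne
    refine hY.ne_smul (Finset.mem_of_mem_erase hr) (Finset.mem_of_mem_erase hr') hne
      ((c r)⁻¹ * c r') ?_
    rw [mul_smul, ← hs r' hr', ← hss, hs r hr, smul_smul, inv_mul_cancel₀ (hc r hr), one_smul]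
  let f : Polynomial K :=
    aeval (fun i => Polynomial.C (q i) * Polynomial.X + Polynomial.C (w i)) F
  have hf : f ≠ 0 := by
    intro h
    rw [← coeff_aeval_linear_of_isHomogeneous hF q w] at hFq
    exact hFq ((congrArg (Polynomial.coeff · d) h).trans (Polynomial.coeff_zero d))
  have hroots : ((Y.erase q).image s).val ⊆ f.roots := by
    intro t ht
    obtain ⟨r, hr, rfl⟩ := Finset.mem_image.1 ht
    rw [Polynomial.mem_roots hf, Polynomial.IsRoot, eval_aeval_linear, hs r hr,
      eval_smul_of_isHomogeneous hF, hFY r (Finset.mem_of_mem_erase hr) (Finset.ne_of_mem_erase hr),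
      mul_zero]
  calc (Y.erase q).card = ((Y.erase q).image s).card := (Finset.card_image_of_injOn hinj).symm
    _ ≤ f.natDegree := Polynomial.card_le_degree_of_subset_roots hroots
    _ ≤ d * 1 := aeval_natDegree_le F hF.totalDegree_le _ fun i => Polynomial.natDegree_linear_le
    _ = d := mul_one d

theorem deg1_eq_card_sub_one (hY : GoodSet K (N := 1) Y) (hq : q ∈ Y) :
    deg1 K (N := 1) Y q = Y.card - 1 := by
  classical
  refine le_antisymm (deg1_le_of_mem_sepDegs1 (card_sub_one_mem_sepDegs1 hY hq)) ?_
  obtain ⟨F, hF, hFq, hFY⟩ := deg1_mem_sepDegs1 hY hq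
  rw [← Finset.card_erase_of_mem hq]
  exact card_erase_le_of_isHomogeneous hY hq (isHom1_natCast_iff.1 hF) hFq hFY

theorem isCB1_projectiveLine (hY : GoodSet K (N := 1) Y) : IsCB1 K (N := 1) Y :=
  (isCB1_iff_deg1_eq hY).2 fun p hp q hq => by
    rw [deg1_eq_card_sub_one hY hp, deg1_eq_card_sub_one hY hq]

end ProjectiveLine

section Fibres

variable {K : Type} {m n : ℕ} {𝕏 : Finset (BiPt K m n)} {p q : BiPt K m n}

theorem StarProp.of_eq_product {A : Finset (Fin (m + 1) → K)} {B : Finset (Fin (n + 1) → K)}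
    (h : 𝕏 = A ×ˢ B) : StarProp K 𝕏 := by
  subst h
  intro p hp q hq
  exact .inl (Finset.mk_mem_product (Finset.mem_product.1 hp).1 (Finset.mem_product.1 hq).2)

variable [DecidableEq K]

theorem mem_Vset_iff {x : Fin (m + 1) → K} : x ∈ Vset K 𝕏 p ↔ (x, p.2) ∈ 𝕏 := by
  simp [Vset]

theorem mem_Wset_iff {y : Fin (n + 1) → K} : y ∈ Wset K 𝕏 p ↔ (p.1, y) ∈ 𝕏 := by
  simp [Wset]

theorem Vset_subset_image_fst : Vset K 𝕏 p ⊆ 𝕏.image Prod.fst := fun _ hx =>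
  Finset.mem_image_of_mem Prod.fst (mem_Vset_iff.1 hx)

theorem Wset_subset_image_snd : Wset K 𝕏 p ⊆ 𝕏.image Prod.snd := fun _ hy =>
  Finset.mem_image_of_mem Prod.snd (mem_Wset_iff.1 hy)

theorem Vset_eq_image_fst (h : 𝕏 = 𝕏.image Prod.fst ×ˢ 𝕏.image Prod.snd) (hp : p ∈ 𝕏) :
    Vset K 𝕏 p = 𝕏.image Prod.fst := by
  refine Vset_subset_image_fst.antisymm fun x hx => mem_Vset_iff.2 ?_
  rw [h]
  exact Finset.mk_mem_product hx (Finset.mem_image_of_mem _ hp)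

theorem Wset_eq_image_snd (h : 𝕏 = 𝕏.image Prod.fst ×ˢ 𝕏.image Prod.snd) (hp : p ∈ 𝕏) :
    Wset K 𝕏 p = 𝕏.image Prod.snd := by
  refine Wset_subset_image_snd.antisymm fun y hy => mem_Wset_iff.2 ?_
  rw [h]
  exact Finset.mk_mem_product (Finset.mem_image_of_mem _ hp) hy

theorem StarProp.Vset_subset_or_subset (hstar : StarProp K 𝕏) (p q : BiPt K m n) :
    Vset K 𝕏 p ⊆ Vset K 𝕏 q ∨ Vset K 𝕏 q ⊆ Vset K 𝕏 p := by
  by_contra! h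
  obtain ⟨⟨x, hxp, hxq⟩, ⟨x', hxq', hxp'⟩⟩ := h.imp Finset.not_subset.1 Finset.not_subset.1
  rw [mem_Vset_iff] at hxp hxq hxq' hxp'
  exact (hstar _ hxp _ hxq').elim hxq hxp'

theorem StarProp.eq_product_of_card_Vset_eq (hstar : StarProp K 𝕏)
    (hcard : ∀ p ∈ 𝕏, ∀ q ∈ 𝕏, (Vset K 𝕏 p).card = (Vset K 𝕏 q).card) :
    𝕏 = 𝕏.image Prod.fst ×ˢ 𝕏.image Prod.snd := by
  have hV : ∀ p ∈ 𝕏, ∀ q ∈ 𝕏, Vset K 𝕏 p = Vset K 𝕏 q := fun p hp q hq =>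
    (hstar.Vset_subset_or_subset p q).elim
      (fun h => Finset.eq_of_subset_of_card_le h (hcard q hq p hp).le)
      fun h => (Finset.eq_of_subset_of_card_le h (hcard p hp q hq).le).symm
  refine Finset.subset_product.antisymm fun ⟨x, y⟩ hxy => ?_
  simp only [Finset.mem_product, Finset.mem_image] at hxy
  obtain ⟨⟨p, hp, rfl⟩, q, hq, rfl⟩ := hxy
  rw [← mem_Vset_iff, ← hV p hp q hq, mem_Vset_iff]
  exact hp

end Fibres

section Biprojective

variable {m n : ℕ} {𝕏 : Finset (BiPt K m n)} {p q : BiPt K m n}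

theorem exists_isHom1_eval_fst {F : BiRing K m n} {d : ℤ × ℤ} (hF : IsBihom K F d)
    (y : Fin (n + 1) → K) :
    ∃ G : PRing K m, IsHom1 K G d.1 ∧ ∀ x, eval x G = evalB K (x, y) F := by
  refine ⟨bind₁ (Sum.elim X fun j => C (y j)) F,
    isWeightedHomogeneous_bind₁ (AddMonoidHom.fst ℤ ℤ) ?_ hF, fun x => ?_⟩
  · rintro (i | j)
    · exact isWeightedHomogeneous_X K (wt1 m) i
    · exact isWeightedHomogeneous_C (wt1 m) _
  · rw [eval_bind₁, evalB]
    congr 2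
    funext i
    rcases i with i | j <;> simp

theorem exists_isHom1_eval_snd {F : BiRing K m n} {d : ℤ × ℤ} (hF : IsBihom K F d)
    (x : Fin (m + 1) → K) :
    ∃ G : PRing K n, IsHom1 K G d.2 ∧ ∀ y, eval y G = evalB K (x, y) F := by
  refine ⟨bind₁ (Sum.elim (fun i => C (x i)) X) F,
    isWeightedHomogeneous_bind₁ (AddMonoidHom.snd ℤ ℤ) ?_ hF, fun y => ?_⟩
  · rintro (i | j)
    · exact isWeightedHomogeneous_C (wt1 n) _
    · exact isWeightedHomogeneous_X K (wt1 n) j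
  · rw [eval_bind₁, evalB]
    congr 2
    funext i
    rcases i with i | j <;> simp

theorem exists_isBihom_eval_eq_mul {F : PRing K m} {G : PRing K n} {d e : ℤ} (hF : IsHom1 K F d)
    (hG : IsHom1 K G e) :
    ∃ H : BiRing K m n, IsBihom K H (d, e) ∧ ∀ p, evalB K p H = eval p.1 F * eval p.2 G := by
  have hF' : IsBihom K (bind₁ (fun i => X (Sum.inl i)) F : BiRing K m n) (d, 0) :=
    isWeightedHomogeneous_bind₁ (AddMonoidHom.inl ℤ ℤ)
      (fun i => isWeightedHomogeneous_X K (biwt m n) (Sum.inl i)) hF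
  have hG' : IsBihom K (bind₁ (fun j => X (Sum.inr j)) G : BiRing K m n) (0, e) :=
    isWeightedHomogeneous_bind₁ (AddMonoidHom.inr ℤ ℤ)
      (fun j => isWeightedHomogeneous_X K (biwt m n) (Sum.inr j)) hG
  refine ⟨bind₁ (fun i => X (Sum.inl i)) F * bind₁ (fun j => X (Sum.inr j)) G, ?_, fun p => ?_⟩
  · have hdeg : ((d, 0) + (0, e) : ℤ × ℤ) = (d, e) := by rw [Prod.mk_add_mk, add_zero, zero_add]
    exact hdeg ▸ hF'.mul hG'
  · simp only [evalB, map_mul, eval_bind₁, eval_X, Sum.elim_inl, Sum.elim_inr]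

theorem mem_sepDegs1_Vset_of_mem_sepDegsB [DecidableEq K] {d : ℤ × ℤ} (hd : d ∈ sepDegsB K 𝕏 p) :
    d.1 ∈ sepDegs1 (Vset K 𝕏 p) p.1 := by
  obtain ⟨F, hF, hFp, hF𝕏⟩ := hd
  obtain ⟨G, hG, hGF⟩ := exists_isHom1_eval_fst hF p.2
  refine ⟨G, hG, (hGF p.1).trans_ne hFp, fun x hx hxp => (hGF x).trans ?_⟩
  exact hF𝕏 _ (mem_Vset_iff.1 hx) fun h => hxp (congrArg Prod.fst h)

theorem mem_sepDegs1_Wset_of_mem_sepDegsB [DecidableEq K] {d : ℤ × ℤ} (hd : d ∈ sepDegsB K 𝕏 p) :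
    d.2 ∈ sepDegs1 (Wset K 𝕏 p) p.2 := by
  obtain ⟨F, hF, hFp, hF𝕏⟩ := hd
  obtain ⟨G, hG, hGF⟩ := exists_isHom1_eval_snd hF p.1
  refine ⟨G, hG, (hGF p.2).trans_ne hFp, fun y hy hyp => (hGF y).trans ?_⟩
  exact hF𝕏 _ (mem_Wset_iff.1 hy) fun h => hyp (congrArg Prod.snd h)

variable [DecidableEq K]

theorem StarProp.mk_mem_sepDegsB (hstar : StarProp K 𝕏) (hp : p ∈ 𝕏) {d e : ℤ}
    (hd : d ∈ sepDegs1 (Vset K 𝕏 p) p.1) (he : e ∈ sepDegs1 (Wset K 𝕏 p) p.2) :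
    (d, e) ∈ sepDegsB K 𝕏 p := by
  obtain ⟨F, hF, hFp, hFV⟩ := hd
  obtain ⟨G, hG, hGp, hGW⟩ := he
  obtain ⟨H, hH, hHeval⟩ := exists_isBihom_eval_eq_mul hF hG
  refine ⟨H, hH, (hHeval p).trans_ne (mul_ne_zero hFp hGp), fun q hq hqp => ?_⟩
  rw [hHeval, mul_eq_zero]
  by_cases h₁ : q.1 = p.1
  · have h₂ : q.2 ≠ p.2 := fun h₂ => hqp (Prod.ext h₁ h₂)
    exact .inr (hGW q.2 (mem_Wset_iff.2 (h₁ ▸ hq)) h₂)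
  by_cases h₂ : q.2 = p.2
  · exact .inl (hFV q.1 (mem_Vset_iff.2 (h₂ ▸ hq)) h₁)
  · rcases hstar p hp q hq with h | h
    · exact .inr (hGW q.2 (mem_Wset_iff.2 h) h₂)
    · exact .inl (hFV q.1 (mem_Vset_iff.2 h) h₁)

theorem GoodConfig.goodSet_image_fst (h : GoodConfig K 𝕏) : GoodSet K (𝕏.image Prod.fst) := by
  simp only [GoodSet, Finset.forall_mem_image]
  exact ⟨fun p hp => (h.1 p hp).1, fun p hp q hq => h.2.1 p hp q hq⟩

theorem GoodConfig.goodSet_image_snd (h : GoodConfig K 𝕏) : GoodSet K (𝕏.image Prod.snd) := by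
  simp only [GoodSet, Finset.forall_mem_image]
  exact ⟨fun p hp => (h.1 p hp).2, fun p hp q hq => h.2.2 p hp q hq⟩

theorem GoodConfig.goodSet_Vset (h : GoodConfig K 𝕏) (p : BiPt K m n) : GoodSet K (Vset K 𝕏 p) :=
  h.goodSet_image_fst.subset Vset_subset_image_fst

theorem GoodConfig.goodSet_Wset (h : GoodConfig K 𝕏) (p : BiPt K m n) : GoodSet K (Wset K 𝕏 p) :=
  h.goodSet_image_snd.subset Wset_subset_image_snd

theorem sepDegsB_eq_Ici (hgood : GoodConfig K 𝕏) (hstar : StarProp K 𝕏) (hp : p ∈ 𝕏) :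
    sepDegsB K 𝕏 p =
      Set.Ici ((deg1 K (Vset K 𝕏 p) p.1 : ℤ), (deg1 K (Wset K 𝕏 p) p.2 : ℤ)) := by
  rw [← Set.Ici_prod_Ici, ← sepDegs1_eq_Ici (hgood.goodSet_Vset p) (mem_Vset_iff.2 hp),
    ← sepDegs1_eq_Ici (hgood.goodSet_Wset p) (mem_Wset_iff.2 hp)]
  exact Set.Subset.antisymm
    (fun d hd => ⟨mem_sepDegs1_Vset_of_mem_sepDegsB hd, mem_sepDegs1_Wset_of_mem_sepDegsB hd⟩)
    fun d hd => hstar.mk_mem_sepDegsB hp hd.1 hd.2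

theorem hasCB_iff_sepDegsB_eq :
    HasCB K 𝕏 ↔ ∀ p ∈ 𝕏, ∀ q ∈ 𝕏, sepDegsB K 𝕏 p = sepDegsB K 𝕏 q :=
  forall₄_congr fun _ hp _ hq => hilbertFunction_erase_eq_iff (w := biwt m n)
    (P := fun p : BiPt K m n => Sum.elim p.1 p.2) hp hq

theorem hasCB_iff_deg1_eq (hgood : GoodConfig K 𝕏) (hstar : StarProp K 𝕏) :
    HasCB K 𝕏 ↔ ∀ p ∈ 𝕏, ∀ q ∈ 𝕏, deg1 K (Vset K 𝕏 p) p.1 = deg1 K (Vset K 𝕏 q) q.1 ∧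
      deg1 K (Wset K 𝕏 p) p.2 = deg1 K (Wset K 𝕏 q) q.2 := by
  refine hasCB_iff_sepDegsB_eq.trans (forall₄_congr fun p hp q hq => ?_)
  rw [sepDegsB_eq_Ici hgood hstar hp, sepDegsB_eq_Ici hgood hstar hq, Set.Ici_inj, Prod.mk.injEq,
    Nat.cast_inj, Nat.cast_inj]

theorem hasCB_iff_isCB1_and_isCB1 (hgood : GoodConfig K 𝕏)
    (h : 𝕏 = 𝕏.image Prod.fst ×ˢ 𝕏.image Prod.snd) :
    HasCB K 𝕏 ↔ IsCB1 K (𝕏.image Prod.fst) ∧ IsCB1 K (𝕏.image Prod.snd) := by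
  rw [hasCB_iff_deg1_eq hgood (.of_eq_product h), isCB1_iff_deg1_eq hgood.goodSet_image_fst,
    isCB1_iff_deg1_eq hgood.goodSet_image_snd]
  simp only [Finset.forall_mem_image, ← forall_and]
  refine forall₄_congr fun p hp q hq => ?_
  rw [Vset_eq_image_fst h hp, Vset_eq_image_fst h hq, Wset_eq_image_snd h hp,
    Wset_eq_image_snd h hq]

theorem eq_product_of_hasCB {𝕏 : Finset (BiPt K 1 n)} (hgood : GoodConfig K 𝕏)
    (hstar : StarProp K 𝕏) (hCB : HasCB K 𝕏) : 𝕏 = 𝕏.image Prod.fst ×ˢ 𝕏.image Prod.snd := by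
  refine hstar.eq_product_of_card_Vset_eq fun p hp q hq => ?_
  have hpV : p.1 ∈ Vset K 𝕏 p := mem_Vset_iff.2 hp
  have hqV : q.1 ∈ Vset K 𝕏 q := mem_Vset_iff.2 hq
  have hdeg := ((hasCB_iff_deg1_eq hgood hstar).1 hCB p hp q hq).1
  rw [deg1_eq_card_sub_one (hgood.goodSet_Vset p) hpV,
    deg1_eq_card_sub_one (hgood.goodSet_Vset q) hqV] at hdeg
  have := Finset.card_pos.2 ⟨_, hpV⟩
  have := Finset.card_pos.2 ⟨_, hqV⟩
  omega

end Biprojective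

end MultiProjPoints

open MultiProjPoints in
theorem statement_18_general (K : Type) [Field K] [DecidableEq K] (n : ℕ) (𝕏 : Finset (BiPt K 1 n))
    (hgood : GoodConfig K 𝕏) (hstar : StarProp K 𝕏) :
    HasCB K 𝕏 ↔
      (𝕏 = (𝕏.image Prod.fst) ×ˢ (𝕏.image Prod.snd) ∧ IsCB1 K (𝕏.image Prod.snd)) := by
  constructor
  · intro hCB
    have h := eq_product_of_hasCB hgood hstar hCB
    exact ⟨h, ((hasCB_iff_isCB1_and_isCB1 hgood h).1 hCB).2⟩
  · rintro ⟨h, hCB⟩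
    exact (hasCB_iff_isCB1_and_isCB1 hgood h).2 ⟨isCB1_projectiveLine hgood.goodSet_image_fst, hCB⟩

open MultiProjPoints in
/-- Proposition 5.5: if `𝕏 ⊆ P^1 × P^n` has the
`(⋆)`-property, then `𝕏` has the Cayley-Bacharach property iff
`𝕏 = 𝕏₁ × 𝕏₂` and `𝕏₂ ⊆ P^n` is a Cayley-Bacharach scheme. -/
theorem statement_18 (K : Type) [Field K] [CharZero K] [DecidableEq K]
    (n : ℕ) (𝕏 : Finset (BiPt K 1 n)) (hgood : GoodConfig K 𝕏)
    (hne : 𝕏.Nonempty) (hstar : StarProp K 𝕏) :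
    HasCB K 𝕏 ↔
      (𝕏 = (𝕏.image Prod.fst) ×ˢ (𝕏.image Prod.snd) ∧
        IsCB1 K (𝕏.image Prod.snd)) :=
  statement_18_general K n 𝕏 hgood hstar
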